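/- Let 0 < θ < 1, let p₀, p₁, q₀, q₁ be globally log-Hölder continuous exponents with 1 ≤ p₀⁻ ≤ p₀⁺ < ∞, 1 ≤ p₁⁻ ≤ p₁⁺ < ∞, 1 ≤ q₀⁻ ≤ q₀⁺ < ∞, 1 ≤ q₁⁻ ≤ q₁⁺ < ∞, and let α₀, α₁ : ℝ^n → ℝ be locally log-Hölder continuous. Define 1/p(·) := (1−θ)/p₀(·) + θ/p₁(·), 1/q(·) := (1−θ)/q₀(·) + θ/q₁(·), and α(·) := (1−θ)α₀(·) + θα₁(·). Assume that p(x)/p₀(x) = q(x)/q₀(x) for all x ∈ ℝ^n. Then the Calderón product (f^{α₀(·)}_{p₀(·),q₀(·)})^{1−θ} · (f^{α₁(·)}_{p₁(·),q₁(·)})^{θ} equals f^{α(·)}_{p(·),q(·)} with equivalent norms. -/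

import Mathlib

open MeasureTheory ENNReal Real Set

noncomputable section

/-- Euclidean space ℝ^n. -/
abbrev En (n : ℕ) := EuclideanSpace ℝ (Fin n)

/-- `g` is locally log-Hölder continuous with constant `c`. -/
def LocLogHolder {n : ℕ} (c : ℝ) (g : En n → ℝ) : Prop :=
  0 < c ∧ ∀ x y : En n, |g x - g y| ≤ c / Real.log (Real.exp 1 + 1 / ‖x - y‖)

/-- `g` is globally log-Hölder continuous with local constant `c`. -/
def GlobLogHolder {n : ℕ} (c : ℝ) (g : En n → ℝ) : Prop :=
  LocLogHolder c g ∧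
    ∃ (gi cd : ℝ), 0 < cd ∧ ∀ x : En n, |g x - gi| ≤ cd / Real.log (Real.exp 1 + ‖x‖)

/-- The kernel η_{v,h}(x) = 2^{nv} (1 + 2^v |x|)^{-h}. -/
def eta (n : ℕ) (v : ℕ) (h : ℝ) (x : En n) : ℝ :=
  (2 : ℝ) ^ (n * v) * (1 + (2 : ℝ) ^ v * ‖x‖) ^ (-h)

/-- The dyadic cube Q_{v,m}. -/
def dyadicCube (n : ℕ) (v : ℤ) (m : Fin n → ℤ) : Set (En n) :=
  {x | ∀ i, (m i : ℝ) ≤ (2 : ℝ) ^ v * x i ∧ (2 : ℝ) ^ v * x i < m i + 1}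

/-- Luxemburg (quasi-)norm of an ℝ≥0∞-valued function with variable exponent `p`. -/
def luxNorm {n : ℕ} (p : En n → ℝ) (F : En n → ℝ≥0∞) : ℝ≥0∞ :=
  sInf {c : ℝ≥0∞ | 0 < c ∧ ∫⁻ x, (F x / c) ^ p x ≤ 1}

/-- The mixed Lebesgue-sequence space norm ‖(F_v)_v‖_{L^{p(·)}(ℓ_{q(·)})}. -/
def mixedNorm {n : ℕ} (p q : En n → ℝ) (F : ℕ → En n → ℝ≥0∞) : ℝ≥0∞ :=
  luxNorm p fun x => (∑' v : ℕ, F v x ^ q x) ^ (1 / q x)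

/-- The sequence space norm ‖λ‖_{f^{α(·)}_{p(·),q(·)}}. -/
def seqNorm {n : ℕ} (α p q : En n → ℝ) (lam : ℕ → (Fin n → ℤ) → ℂ) : ℝ≥0∞ :=
  mixedNorm p q fun v x =>
    ∑' m : Fin n → ℤ,
      ENNReal.ofReal ((2 : ℝ) ^ ((v : ℝ) * (α x + n / 2)) * ‖lam v m‖) *
        (dyadicCube n (v : ℤ) m).indicator (fun _ => (1 : ℝ≥0∞)) x

/-- The sequence space norm ‖λ‖_{f^{α(·)}_{∞,q}}. -/
def seqNormInf {n : ℕ} (α : En n → ℝ) (q : ℝ) (lam : ℕ → (Fin n → ℤ) → ℂ) : ℝ≥0∞ :=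
  ⨆ (vQ : ℤ) (mQ : Fin n → ℤ),
    volume (dyadicCube n vQ mQ) ^ (-(1 / q)) *
      (∑' v : ℕ, if vQ ≤ (v : ℤ) then
          ∫⁻ x in dyadicCube n vQ mQ,
            ∑' m : Fin n → ℤ,
              ENNReal.ofReal ((2 : ℝ) ^ ((v : ℝ) * (α x + n / 2) * q) * ‖lam v m‖ ^ q) *
                (dyadicCube n (v : ℤ) m).indicator (fun _ => (1 : ℝ≥0∞)) x
        else 0) ^ (1 / q)

/-- The Calderón product (quasi-)norm associated to two sequence space norms. -/
def calderonNorm {n : ℕ} (N0 N1 : (ℕ → (Fin n → ℤ) → ℂ) → ℝ≥0∞) (θ : ℝ)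
    (lam : ℕ → (Fin n → ℤ) → ℂ) : ℝ≥0∞ :=
  sInf {M : ℝ≥0∞ | ∃ μ ν : ℕ → (Fin n → ℤ) → ℂ, N0 μ ≤ 1 ∧ N1 ν ≤ 1 ∧
    ∀ v m, ENNReal.ofReal ‖lam v m‖ ≤
      M * ENNReal.ofReal ‖μ v m‖ ^ (1 - θ) * ENNReal.ofReal ‖ν v m‖ ^ θ}


/-- index of the dyadic cube of generation v containing x -/
def cubeIdx {n : ℕ} (v : ℕ) (x : En n) : Fin n → ℤ := fun i => ⌊(2 : ℝ) ^ v * x i⌋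

/-- corner of the dyadic cube -/
def corner {n : ℕ} (v : ℕ) (m : Fin n → ℤ) : En n := WithLp.toLp 2 (fun i => (m i : ℝ) / 2 ^ v)

lemma mem_cube_iff {n : ℕ} (v : ℕ) (m : Fin n → ℤ) (x : En n) :
    x ∈ dyadicCube n (v : ℤ) m ↔ m = cubeIdx v x := by
  simp only [dyadicCube, cubeIdx, Set.mem_ofPred_eq, zpow_natCast, funext_iff]
  refine forall_congr' fun i => ?_
  rw [eq_comm, Int.floor_eq_iff]

lemma seqNorm_eq {n : ℕ} (α p q : En n → ℝ) (lam : ℕ → (Fin n → ℤ) → ℂ) :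
    seqNorm α p q lam = luxNorm p fun x => (∑' v : ℕ,
      ENNReal.ofReal ((2 : ℝ) ^ ((v : ℝ) * (α x + n / 2)) * ‖lam v (cubeIdx v x)‖) ^ q x)
        ^ (1 / q x) := by
  unfold seqNorm mixedNorm
  congr 1
  funext x
  congr 2
  funext v
  congr 1
  beta_reduce
  rw [tsum_eq_single (cubeIdx v x)]
  · rw [Set.indicator_of_mem ((mem_cube_iff v _ x).2 rfl), mul_one]
  · intro m hm
    rw [Set.indicator_of_notMem (fun h => hm ((mem_cube_iff v _ x).1 h)), mul_zero]

lemma dist_corner {n : ℕ} (v : ℕ) (x : En n) :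
    ‖x - corner v (cubeIdx v x)‖ ≤ ((n : ℝ) + 1) / 2 ^ v := by
  have h2 : (0 : ℝ) < 2 ^ v := by positivity
  rw [EuclideanSpace.norm_eq]
  apply Real.sqrt_le_iff.2 ⟨by positivity, ?_⟩
  have hi : ∀ i ∈ (Finset.univ : Finset (Fin n)),
      ‖(x - corner v (cubeIdx v x)) i‖ ^ 2 ≤ (1 / 2 ^ v) ^ 2 := by
    intro i _
    have e : (x - corner v (cubeIdx v x)) i = Int.fract ((2 : ℝ) ^ v * x i) / 2 ^ v := by
      simp only [corner, cubeIdx, PiLp.sub_apply, Int.fract]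
      field_simp
    rw [e, Real.norm_eq_abs, abs_of_nonneg (div_nonneg (Int.fract_nonneg _) h2.le)]
    have := (Int.fract_lt_one ((2 : ℝ) ^ v * x i)).le
    have := Int.fract_nonneg ((2 : ℝ) ^ v * x i)
    gcongr
  refine (Finset.sum_le_sum hi).trans ?_
  simp only [Finset.sum_const, Finset.card_univ, Fintype.card_fin, nsmul_eq_mul]
  rw [div_pow, div_pow, one_pow, mul_one_div]
  gcongr
  nlinarith [(Nat.cast_nonneg n : (0 : ℝ) ≤ n)]

lemma log_ge_one {t : ℝ} (ht : 0 ≤ t) : 1 ≤ Real.log (Real.exp 1 + t) := by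
  rw [Real.le_log_iff_exp_le (by positivity)]
  linarith

lemma LocLogHolder.bdd {n : ℕ} {c : ℝ} {g : En n → ℝ} (h : LocLogHolder c g) (x y : En n) :
    |g x - g y| ≤ c := by
  refine (h.2 x y).trans ?_
  exact div_le_self h.1.le (log_ge_one (by positivity))

lemma LocLogHolder.cube {n : ℕ} {c : ℝ} {g : En n → ℝ} (h : LocLogHolder c g) :
    ∃ C : ℝ, 0 ≤ C ∧ ∀ (v : ℕ) (x : En n), (v : ℝ) * |g x - g (corner v (cubeIdx v x))| ≤ C := by
  have hc := h.1
  set R : ℝ := (n : ℝ) + 1 with hR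
  have hR1 : 1 ≤ R := by rw [hR]; linarith [(Nat.cast_nonneg n : (0 : ℝ) ≤ n)]
  have hlR : 0 ≤ Real.log R := Real.log_nonneg hR1
  have hl2 : 0 < Real.log 2 := Real.log_pos (by norm_num)
  refine ⟨c * (1 + Real.log R) / Real.log 2, by positivity, fun v x => ?_⟩
  set y := corner v (cubeIdx v x)
  have hd := dist_corner v x
  have h2 := h.2 x y
  by_cases h0 : ‖x - y‖ = 0
  · have : x = y := by rwa [norm_eq_zero, sub_eq_zero] at h0
    rw [← this]; simp; positivity
  have hd0 : 0 < ‖x - y‖ := lt_of_le_of_ne (norm_nonneg _) (Ne.symm h0)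
  set L := Real.log (Real.exp 1 + 1 / ‖x - y‖) with hL
  have hL1 : 1 ≤ L := log_ge_one (by positivity)
  have hv : (v : ℝ) * Real.log 2 ≤ Real.log R + L := by
    rw [← Real.log_pow, hL, ← Real.log_mul (by positivity) (by positivity)]
    apply Real.log_le_log (by positivity)
    have : (2 : ℝ) ^ v ≤ R * (1 / ‖x - y‖) := by
      rw [le_div_iff₀ (by positivity)] at hd
      rw [mul_one_div, le_div_iff₀ hd0]; linarith
    nlinarith [Real.exp_pos 1]
  have hv2 : (v : ℝ) * Real.log 2 ≤ (1 + Real.log R) * L := by nlinarith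
  calc (v : ℝ) * |g x - g y| ≤ v * (c / L) := by gcongr
    _ ≤ _ := by
      rw [← mul_div_assoc, div_le_div_iff₀ (by positivity) hl2]
      nlinarith

lemma GlobLogHolder.cube {n : ℕ} {c : ℝ} {g : En n → ℝ} (h : GlobLogHolder c g) :
    ∃ C : ℝ, 0 ≤ C ∧ ∀ (v : ℕ) (x : En n), 
      Real.log (Real.exp 1 + ‖corner v (cubeIdx v x)‖) * |g x - g (corner v (cubeIdx v x))| ≤ C := by
  obtain ⟨-, gi, d, hd, hg⟩ := h
  set R : ℝ := (n : ℝ) + 1 with hR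
  have hR1 : 1 ≤ R := by rw [hR]; linarith [(Nat.cast_nonneg n : (0 : ℝ) ≤ n)]
  have hlR : 0 ≤ Real.log (1 + R) := Real.log_nonneg (by linarith)
  refine ⟨d * (1 + Real.log (1 + R)) + d, by positivity, fun v x => ?_⟩
  have hdist := dist_corner v x
  set y := corner v (cubeIdx v x)
  have hxy : ‖y‖ ≤ ‖x‖ + R := by
    have h1 : ‖y‖ ≤ ‖x‖ + ‖x - y‖ := by
      have := norm_sub_le x (x - y); simpa using this
    have h2 : R / 2 ^ v ≤ R := div_le_self (by positivity) (one_le_pow₀ (by norm_num))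
    linarith
  have hx1 := log_ge_one (norm_nonneg x)
  have hy1 := log_ge_one (norm_nonneg y)
  have hlog : Real.log (Real.exp 1 + ‖y‖) ≤ (1 + Real.log (1 + R)) * Real.log (Real.exp 1 + ‖x‖) := by
    have : Real.log (Real.exp 1 + ‖y‖) ≤ Real.log (1 + R) + Real.log (Real.exp 1 + ‖x‖) := by
      rw [← Real.log_mul (by positivity) (by positivity)]
      apply Real.log_le_log (by positivity)
      have : 1 ≤ Real.exp 1 := Real.one_le_exp (by norm_num)
      nlinarith [norm_nonneg x]
    nlinarith
  have ht : |g x - g y| ≤ d / Real.log (Real.exp 1 + ‖x‖) + d / Real.log (Real.exp 1 + ‖y‖) := by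
    calc |g x - g y| ≤ |g x - gi| + |gi - g y| := abs_sub_le _ _ _
      _ ≤ _ := by rw [abs_sub_comm gi]; exact add_le_add (hg x) (hg y)
  set Lx := Real.log (Real.exp 1 + ‖x‖)
  set Ly := Real.log (Real.exp 1 + ‖y‖)
  calc Ly * |g x - g y| ≤ Ly * (d / Lx + d / Ly) := by gcongr
    _ = d * (Ly / Lx) + d := by field_simp
    _ ≤ _ := by
      have : Ly / Lx ≤ 1 + Real.log (1 + R) := by rwa [div_le_iff₀ (by positivity)]
      gcongr

lemma LocLogHolder.continuous {n : ℕ} {c : ℝ} {g : En n → ℝ} (h : LocLogHolder c g) :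
    Continuous g := by
  rw [continuous_iff_continuousAt]
  intro x
  rw [Metric.continuousAt_iff]
  intro ε hε
  have hc := h.1
  refine ⟨Real.exp (-(2 * c / ε)), Real.exp_pos _, fun {y} hy => ?_⟩
  rw [dist_eq_norm] at hy
  rw [Real.dist_eq]
  by_cases h0 : ‖y - x‖ = 0
  · have : y = x := by rwa [norm_eq_zero, sub_eq_zero] at h0
    rw [this]; simpa using hε
  have hd0 : 0 < ‖y - x‖ := lt_of_le_of_ne (norm_nonneg _) (Ne.symm h0)
  have hL1 : 2 * c / ε ≤ Real.log (Real.exp 1 + 1 / ‖y - x‖) := by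
    rw [Real.le_log_iff_exp_le (by positivity)]
    have : Real.exp (2 * c / ε) ≤ 1 / ‖y - x‖ := by
      rw [le_div_iff₀ hd0]
      calc _ ≤ Real.exp (2 * c / ε) * Real.exp (-(2 * c / ε)) := by gcongr
        _ = 1 := by rw [← Real.exp_add]; simp
    linarith [Real.exp_pos 1]
  calc |g y - g x| ≤ _ := h.2 y x
    _ ≤ c / (2 * c / ε) := by gcongr
    _ = ε / 2 := by field_simp
    _ < ε := by linarith

lemma volume_cube {n : ℕ} (v : ℕ) (m : Fin n → ℤ) :
    MeasurableSet (dyadicCube n (v : ℤ) m) ∧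
      volume (dyadicCube n (v : ℤ) m) = ENNReal.ofReal ((1 / 2 ^ v) ^ n) := by
  have h2 : (0 : ℝ) < 2 ^ v := by positivity
  have e : dyadicCube n (v : ℤ) m = (MeasurableEquiv.toLp 2 (Fin n → ℝ)).symm ⁻¹'
      (Set.univ.pi fun i => Set.Ico ((m i : ℝ) / 2 ^ v) (((m i : ℝ) + 1) / 2 ^ v)) := by
    ext x
    simp only [dyadicCube, Set.mem_ofPred_eq, zpow_natCast, Set.mem_preimage, Set.mem_pi,
      Set.mem_univ, true_imp_iff, Set.mem_Ico]
    refine forall_congr' fun i => ?_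
    rw [div_le_iff₀' h2, lt_div_iff₀' h2]
    rfl
  have hm : MeasurableSet (Set.univ.pi fun i => Set.Ico ((m i : ℝ) / 2 ^ v) (((m i : ℝ) + 1) / 2 ^ v)) :=
    MeasurableSet.univ_pi fun i => measurableSet_Ico
  constructor
  · rw [e]; exact (MeasurableEquiv.measurable _) hm
  · rw [e, (EuclideanSpace.volume_preserving_symm_measurableEquiv_toLp (Fin n)).measure_preimage hm.nullMeasurableSet,
      Real.volume_pi_Ico]
    have : ∀ i, ((m i : ℝ) + 1) / 2 ^ v - (m i : ℝ) / 2 ^ v = 1 / 2 ^ v := by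
      intro i; ring
    simp only [this, Finset.prod_const, Finset.card_univ, Fintype.card_fin]
    rw [ENNReal.ofReal_pow (by positivity)]

lemma measurable_cubeIdx {n : ℕ} (v : ℕ) : Measurable (cubeIdx v : En n → Fin n → ℤ) := by
  unfold cubeIdx
  refine measurable_pi_lambda _ fun i => ?_
  apply Int.measurable_floor.comp
  have : Measurable fun x : En n => x i := by fun_prop
  fun_prop

lemma lux_half {n : ℕ} {p : En n → ℝ} (hp : ∀ x, 0 ≤ p x) {F : En n → ℝ≥0∞}
    (h : luxNorm p F ≤ 1) : ∫⁻ x, (F x / 2) ^ p x ≤ 1 := by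
  have h2 : luxNorm p F < 2 := h.trans_lt (by norm_num)
  obtain ⟨c, ⟨-, hc⟩, hc2⟩ := sInf_lt_iff.1 h2
  refine (lintegral_mono fun x => ?_).trans hc
  exact ENNReal.rpow_le_rpow (ENNReal.div_le_div_left hc2.le _) (hp x)

lemma rpow_mul_rpow_le_add (a b : ℝ≥0∞) {w z : ℝ} (hw : 0 ≤ w) (hz : 0 ≤ z) (h : w + z = 1) :
    a ^ w * b ^ z ≤ a + b := by
  calc a ^ w * b ^ z ≤ (a + b) ^ w * (a + b) ^ z := by
        gcongr
        · exact le_self_add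
        · exact le_add_self
    _ = a + b := by rw [← ENNReal.rpow_add_of_nonneg _ _ hw hz, h, ENNReal.rpow_one]

lemma tsum_holder (a b : ℕ → ℝ≥0∞) {w z : ℝ} (hw : 0 ≤ w) (hz : 0 ≤ z) (h : w + z = 1) :
    ∑' v, a v ^ w * b v ^ z ≤ (∑' v, a v) ^ w * (∑' v, b v) ^ z := by
  have := ENNReal.lintegral_mul_norm_pow_le (μ := Measure.count) (f := a) (g := b)
    (measurable_of_countable _).aemeasurable (measurable_of_countable _).aemeasurable hw hz h
  simpa only [lintegral_count] using this

/-- pointwise Hölder inequality in ℓ_q -/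
lemma lq_holder (θ : ℝ) (hθ : θ ∈ Set.Ioo (0 : ℝ) 1) {q q0 q1 : ℝ} (hq : 0 < q) (hq0 : 0 < q0)
    (hq1 : 0 < q1) (h : 1 / q = (1 - θ) / q0 + θ / q1) (F G H : ℕ → ℝ≥0∞) (M : ℝ≥0∞)
    (hF : ∀ v, F v ≤ M * G v ^ (1 - θ) * H v ^ θ) :
    (∑' v, F v ^ q) ^ (1 / q) ≤
      M * ((∑' v, G v ^ q0) ^ (1 / q0)) ^ (1 - θ) * ((∑' v, H v ^ q1) ^ (1 / q1)) ^ θ := by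
  obtain ⟨h0, h1⟩ := hθ
  have h1' : 0 < 1 - θ := by linarith
  have hw : (1 - θ) * q / q0 + θ * q / q1 = 1 := by
    have : (1 - θ) * q / q0 + θ * q / q1 = q * (1 / q) := by rw [h]; ring
    rw [this]; field_simp
  have key : ∑' v, F v ^ q ≤ M ^ q * ((∑' v, G v ^ q0) ^ ((1 - θ) * q / q0) *
      (∑' v, H v ^ q1) ^ (θ * q / q1)) := by
    calc ∑' v, F v ^ q ≤ ∑' v, M ^ q * ((G v ^ q0) ^ ((1 - θ) * q / q0) *
          (H v ^ q1) ^ (θ * q / q1)) := by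
          refine ENNReal.tsum_le_tsum fun v => ?_
          refine (ENNReal.rpow_le_rpow (hF v) hq.le).trans_eq ?_
          rw [ENNReal.mul_rpow_of_nonneg _ _ hq.le, ENNReal.mul_rpow_of_nonneg _ _ hq.le,
            ← ENNReal.rpow_mul, ← ENNReal.rpow_mul, ← ENNReal.rpow_mul, ← ENNReal.rpow_mul, mul_assoc]
          congr 3 <;> field_simp
      _ ≤ _ := by
          rw [ENNReal.tsum_mul_left]
          gcongr
          exact tsum_holder _ _ (by positivity) (by positivity) hw
  refine (ENNReal.rpow_le_rpow key (by positivity)).trans_eq ?_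
  have hq' : 0 ≤ 1 / q := by positivity
  rw [ENNReal.mul_rpow_of_nonneg _ _ hq', ENNReal.mul_rpow_of_nonneg _ _ hq', mul_assoc]
  simp only [← ENNReal.rpow_mul]
  congr 2
  · rw [mul_one_div_cancel hq.ne', ENNReal.rpow_one]
  · congr 1; field_simp
  · congr 1; field_simp

lemma two_rpow_split (θ : ℝ) (hθ : θ ∈ Set.Ioo (0 : ℝ) 1) (s t r l a b : ℝ) (M : ℝ≥0∞)
    (hr : r = (1 - θ) * s + θ * t) (ha : 0 ≤ a) (hb : 0 ≤ b)
    (h : ENNReal.ofReal l ≤ M * ENNReal.ofReal a ^ (1 - θ) * ENNReal.ofReal b ^ θ) :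
    ENNReal.ofReal ((2 : ℝ) ^ r * l) ≤ M * ENNReal.ofReal ((2 : ℝ) ^ s * a) ^ (1 - θ) *
      ENNReal.ofReal ((2 : ℝ) ^ t * b) ^ θ := by
  obtain ⟨h0, h1⟩ := hθ
  have h1' : 0 ≤ 1 - θ := by linarith
  have e : ENNReal.ofReal ((2 : ℝ) ^ r) =
      ENNReal.ofReal ((2 : ℝ) ^ s) ^ (1 - θ) * ENNReal.ofReal ((2 : ℝ) ^ t) ^ θ := by
    rw [ENNReal.ofReal_rpow_of_pos (by positivity), ENNReal.ofReal_rpow_of_pos (by positivity),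
      ← ENNReal.ofReal_mul (by positivity), ← Real.rpow_mul (by norm_num),
      ← Real.rpow_mul (by norm_num), ← Real.rpow_add (by norm_num), hr]
    congr 2; ring
  rw [ENNReal.ofReal_mul (by positivity), ENNReal.ofReal_mul (by positivity),
    ENNReal.ofReal_mul (by positivity), ENNReal.mul_rpow_of_nonneg _ _ h1',
    ENNReal.mul_rpow_of_nonneg _ _ h0.le, e]
  calc _ ≤ ENNReal.ofReal ((2 : ℝ) ^ s) ^ (1 - θ) * ENNReal.ofReal ((2 : ℝ) ^ t) ^ θ *
        (M * ENNReal.ofReal a ^ (1 - θ) * ENNReal.ofReal b ^ θ) := by gcongr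
    _ = _ := by ring

lemma one_le_of_inv {θ : ℝ} (hθ : θ ∈ Set.Ioo (0 : ℝ) 1) {p p0 p1 : ℝ} (h0 : 1 ≤ p0) (h1 : 1 ≤ p1)
    (h : 1 / p = (1 - θ) / p0 + θ / p1) : 1 ≤ p := by
  obtain ⟨ha, hb⟩ := hθ
  have hb' : 0 < 1 - θ := by linarith
  have hpos : 0 < 1 / p := by rw [h]; positivity
  have hp : 0 < p := by simpa using hpos
  have e1 : (1 - θ) / p0 ≤ 1 - θ := div_le_self hb'.le h0
  have e2 : θ / p1 ≤ θ := div_le_self ha.le h1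
  have : 1 / p ≤ 1 := by linarith
  rwa [div_le_one hp] at this

lemma measurable_lq {n : ℕ} {α q : En n → ℝ} (hα : Measurable α) (hq : Measurable q)
    (μ : ℕ → (Fin n → ℤ) → ℂ) :
    Measurable fun x : En n => (∑' v : ℕ,
      ENNReal.ofReal ((2 : ℝ) ^ ((v : ℝ) * (α x + n / 2)) * ‖μ v (cubeIdx v x)‖) ^ q x)
        ^ (1 / q x) := by
  have hm : ∀ v, Measurable fun x : En n => ‖μ v (cubeIdx v x)‖ := fun v =>
    (measurable_of_countable fun m => ‖μ v m‖).comp (measurable_cubeIdx v)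
  refine Measurable.pow (Measurable.tsum fun v => ?_) (by fun_prop)
  refine Measurable.pow (Measurable.ennreal_ofReal (Measurable.mul ?_ (hm v))) hq
  fun_prop

lemma lower_int {n : ℕ} (θ : ℝ) (hθ : θ ∈ Set.Ioo (0 : ℝ) 1)
    (p₀ p₁ p : En n → ℝ) (mp₀ : Measurable p₀)
    (hp₀ : ∀ x, 1 ≤ p₀ x) (hp₁ : ∀ x, 1 ≤ p₁ x)
    (hp : ∀ x, 1 / p x = (1 - θ) / p₀ x + θ / p₁ x) (F G H : En n → ℝ≥0∞) (M : ℝ≥0∞)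
    (hM0 : M ≠ 0) (hMt : M ≠ ⊤) (mG : Measurable G)
    (hF : ∀ x, F x ≤ M * G x ^ (1 - θ) * H x ^ θ)
    (hG : ∫⁻ x, (G x / 2) ^ p₀ x ≤ 1) (hH : ∫⁻ x, (H x / 2) ^ p₁ x ≤ 1) :
    ∫⁻ x, (F x / (4 * M)) ^ p x ≤ 1 := by
  have hθ' := hθ
  obtain ⟨h0, h1⟩ := hθ'
  have h1' : 0 < 1 - θ := by linarith
  have key : ∀ x, (F x / (4 * M)) ^ p x ≤ 2⁻¹ * ((G x / 2) ^ p₀ x + (H x / 2) ^ p₁ x) := by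
    intro x
    have hp1 := one_le_of_inv hθ (hp₀ x) (hp₁ x) (hp x)
    have hp0' := lt_of_lt_of_le one_pos (hp₀ x)
    have hp1' := lt_of_lt_of_le one_pos (hp₁ x)
    have hp' := lt_of_lt_of_le one_pos hp1
    have hw : (1 - θ) * p x / p₀ x + θ * p x / p₁ x = 1 := by
      have : (1 - θ) * p x / p₀ x + θ * p x / p₁ x = p x * (1 / p x) := by rw [hp x]; ring
      rw [this]; field_simp
    have e2 : (2 : ℝ≥0∞)⁻¹ ^ (1 - θ) * 2⁻¹ ^ θ = 2⁻¹ := by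
      rw [← ENNReal.rpow_add_of_nonneg _ _ h1'.le h0.le]; simp
    have e1 : F x / (4 * M) ≤ 2⁻¹ * ((G x / 2) ^ (1 - θ) * (H x / 2) ^ θ) := by
      apply ENNReal.div_le_of_le_mul
      rw [div_eq_mul_inv, div_eq_mul_inv, ENNReal.mul_rpow_of_nonneg _ _ h1'.le,
        ENNReal.mul_rpow_of_nonneg _ _ h0.le]
      calc F x ≤ M * G x ^ (1 - θ) * H x ^ θ := hF x
        _ = (2⁻¹ * 2⁻¹ * 4) * (M * G x ^ (1 - θ) * H x ^ θ) := by
            have : (2 : ℝ≥0∞)⁻¹ * 2⁻¹ * 4 = 1 := by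
              rw [← ENNReal.mul_inv (by simp) (by simp)]
              norm_num
              exact ENNReal.inv_mul_cancel (by norm_num) (by norm_num)
            rw [this, one_mul]
        _ = (2⁻¹ * (2⁻¹ ^ (1 - θ) * 2⁻¹ ^ θ) * 4) * (M * G x ^ (1 - θ) * H x ^ θ) := by rw [e2]
        _ = _ := by ring
    refine (ENNReal.rpow_le_rpow e1 hp'.le).trans ?_
    rw [ENNReal.mul_rpow_of_nonneg _ _ hp'.le]
    gcongr
    · calc (2⁻¹ : ℝ≥0∞) ^ p x ≤ 2⁻¹ ^ (1 : ℝ) :=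
            ENNReal.rpow_le_rpow_of_exponent_ge (by simp) hp1
        _ = 2⁻¹ := ENNReal.rpow_one _
    · refine le_trans (le_of_eq ?_) (rpow_mul_rpow_le_add _ _
        (by positivity : 0 ≤ (1 - θ) * p x / p₀ x) (by positivity : 0 ≤ θ * p x / p₁ x) hw)
      rw [ENNReal.mul_rpow_of_nonneg _ _ hp'.le]
      simp only [← ENNReal.rpow_mul]
      congr 2 <;> field_simp
  calc _ ≤ ∫⁻ x, 2⁻¹ * ((G x / 2) ^ p₀ x + (H x / 2) ^ p₁ x) := lintegral_mono key
    _ = 2⁻¹ * ((∫⁻ x, (G x / 2) ^ p₀ x) + ∫⁻ x, (H x / 2) ^ p₁ x) := by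
      rw [lintegral_const_mul' _ _ (by simp), lintegral_add_left]
      exact Measurable.pow (mG.div_const 2) mp₀
    _ ≤ 2⁻¹ * (1 + 1) := by gcongr
    _ = 1 := by rw [one_add_one_eq_two]; exact ENNReal.inv_mul_cancel (by norm_num) (by norm_num)

lemma lower_bound {n : ℕ} (θ : ℝ) (hθ : θ ∈ Set.Ioo (0 : ℝ) 1)
    (p₀ p₁ q₀ q₁ α₀ α₁ p q α : En n → ℝ)
    (mp₀ : Measurable p₀) (mq₀ : Measurable q₀) (mα₀ : Measurable α₀)
    (hp₀ : ∀ x, 1 ≤ p₀ x) (hp₁ : ∀ x, 1 ≤ p₁ x) (hq₀ : ∀ x, 1 ≤ q₀ x) (hq₁ : ∀ x, 1 ≤ q₁ x)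
    (hp : ∀ x, 1 / p x = (1 - θ) / p₀ x + θ / p₁ x)
    (hq : ∀ x, 1 / q x = (1 - θ) / q₀ x + θ / q₁ x)
    (hα : ∀ x, α x = (1 - θ) * α₀ x + θ * α₁ x) (lam : ℕ → (Fin n → ℤ) → ℂ) :
    ENNReal.ofReal (1 / 4) * seqNorm α p q lam ≤
      calderonNorm (seqNorm α₀ p₀ q₀) (seqNorm α₁ p₁ q₁) θ lam := by
  refine le_sInf ?_
  rintro M ⟨μ, ν, hμ, hν, hM⟩
  have hq4 : ENNReal.ofReal (1 / 4) = 4⁻¹ := by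
    rw [one_div, ENNReal.ofReal_inv_of_pos (by norm_num)]; norm_num
  suffices h : seqNorm α p q lam ≤ 4 * M by
    rw [hq4, mul_comm, ← div_eq_mul_inv]
    exact ENNReal.div_le_of_le_mul' h
  suffices h : ∀ M', M < M' → seqNorm α p q lam ≤ 4 * M' by
    rw [mul_comm]
    refine (ENNReal.div_le_iff (by norm_num) (by norm_num)).1 ?_
    refine le_of_forall_gt_imp_ge_of_dense fun M' hM' => ?_
    exact ENNReal.div_le_of_le_mul' (h M' hM')
  intro M' hMM'
  rcases eq_or_ne M' ⊤ with rfl | hM't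
  · rw [ENNReal.mul_top (by norm_num)]; exact le_top
  have hM'0 : M' ≠ 0 := (zero_le.trans_lt hMM').ne'
  rw [seqNorm_eq] at hμ hν ⊢
  have hμ' := lux_half (fun x => zero_le_one.trans (hp₀ x)) hμ
  have hhν := lux_half (fun x => zero_le_one.trans (hp₁ x)) hν
  have mG := measurable_lq mα₀ mq₀ μ
  have hFGH : ∀ x, _ := fun x => lq_holder θ hθ
    (lt_of_lt_of_le one_pos (one_le_of_inv hθ (hq₀ x) (hq₁ x) (hq x)))
    (lt_of_lt_of_le one_pos (hq₀ x)) (lt_of_lt_of_le one_pos (hq₁ x)) (hq x)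
    (fun v => ENNReal.ofReal ((2 : ℝ) ^ ((v : ℝ) * (α x + n / 2)) * ‖lam v (cubeIdx v x)‖))
    (fun v => ENNReal.ofReal ((2 : ℝ) ^ ((v : ℝ) * (α₀ x + n / 2)) * ‖μ v (cubeIdx v x)‖))
    (fun v => ENNReal.ofReal ((2 : ℝ) ^ ((v : ℝ) * (α₁ x + n / 2)) * ‖ν v (cubeIdx v x)‖)) M'
    (fun v => two_rpow_split θ hθ _ _ _ _ _ _ _ (by rw [hα]; ring) (norm_nonneg _) (norm_nonneg _)
      ((hM v _).trans (by gcongr)))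
  beta_reduce at hFGH
  refine sInf_le ⟨by positivity, ?_⟩
  exact lower_int θ hθ p₀ p₁ p mp₀ hp₀ hp₁ hp _ _ _ M' hM'0 hM't mG hFGH hμ' hhν

/-- the auxiliary sequence of the factorization -/
def muSeq {n : ℕ} (α α₀ γ : En n → ℝ) (l : ℕ → (Fin n → ℤ) → ℝ) (v : ℕ) (m : Fin n → ℤ) : ℝ :=
  (2 : ℝ) ^ (-((v : ℝ) * (α₀ (corner v m) + n / 2))) *
    ((2 : ℝ) ^ ((v : ℝ) * (α (corner v m) + n / 2)) * l v m) ^ γ (corner v m)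

set_option maxHeartbeats 2000000 in
lemma pointwise {n : ℕ} (α α₀ γ : En n → ℝ) (g0 g1 Ca Ca0 Cg Cb : ℝ) (hg0 : 0 < g0)
    (hγ : ∀ x, g0 ≤ γ x ∧ γ x ≤ g1) (hCa : 0 ≤ Ca) (hCg : 0 ≤ Cg) (hCb : 1 ≤ Cb)
    (hα : ∀ (v : ℕ) (x : En n), (v : ℝ) * |α x - α (corner v (cubeIdx v x))| ≤ Ca)
    (hα₀ : ∀ (v : ℕ) (x : En n), (v : ℝ) * |α₀ x - α₀ (corner v (cubeIdx v x))| ≤ Ca0)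
    (hγ1 : ∀ (v : ℕ) (x : En n), (v : ℝ) * |γ x - γ (corner v (cubeIdx v x))| ≤ Cg)
    (hγ2 : ∀ (v : ℕ) (x : En n), Real.log (Real.exp 1 + ‖corner v (cubeIdx v x)‖) *
      |γ x - γ (corner v (cubeIdx v x))| ≤ Cg)
    (hγ3 : ∀ (v : ℕ) (x : En n), |γ x - γ (corner v (cubeIdx v x))| ≤ Cg) :
    ∃ C1 : ℝ, 0 < C1 ∧ ∀ l : ℕ → (Fin n → ℤ) → ℝ, (∀ v m, 0 ≤ l v m) →
      (∀ (v : ℕ) (x : En n), (2 : ℝ) ^ ((v : ℝ) * (α x + n / 2)) * l v (cubeIdx v x) ≤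
        Cb * 2 ^ ((v : ℝ) * n)) →
      ∀ (v : ℕ) (x : En n), (2 : ℝ) ^ ((v : ℝ) * (α₀ x + n / 2)) * muSeq α α₀ γ l v (cubeIdx v x) ≤
        C1 * max (((2 : ℝ) ^ ((v : ℝ) * (α x + n / 2)) * l v (cubeIdx v x)) ^ γ x)
          ((1 / 2) ^ v * (1 + ‖x‖) ^ (-((n : ℝ) + 1))) := by
  have hn : (0 : ℝ) ≤ n := Nat.cast_nonneg n
  set K : ℝ := ((n : ℝ) + 1) / g0 with hK
  have hK0 : 0 < K := by positivity
  set B : ℝ := Cg * (2 * K + Ca + Real.log Cb + n) with hB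
  set Ct : ℝ := ((n : ℝ) + 2) ^ ((n : ℝ) + 1) with hCt
  have hCt0 : 0 < Ct := by positivity
  set Cu : ℝ := Real.exp B * 2 ^ (Ca * g1) with hCu
  have hCu0 : 0 < Cu := by positivity
  refine ⟨2 ^ Ca0 * (Ct + Cu), by positivity, fun l hl hb v x => ?_⟩
  have hdist := dist_corner v x
  have ha := hα v x
  have ha0 := hα₀ v x
  have hg1 := hγ1 v x
  have hg2 := hγ2 v x
  have hg3 := hγ3 v x
  have hbx := hb v x
  have hlx := hl v (cubeIdx v x)
  unfold muSeq
  generalize l v (cubeIdx v x) = ll at *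
  generalize corner v (cubeIdx v x) = y at *
  obtain ⟨hgy0, hgy1⟩ := hγ y
  obtain ⟨hgx0, hgx1⟩ := hγ x
  set F : ℝ := (2 : ℝ) ^ ((v : ℝ) * (α x + n / 2)) * ll with hF
  set A : ℝ := (2 : ℝ) ^ ((v : ℝ) * (α y + n / 2)) * ll with hA
  set s : ℝ := (1 / 2) ^ v * (1 + ‖x‖) ^ (-((n : ℝ) + 1)) with hs
  have hF0 : 0 ≤ F := by positivity
  have hA0 : 0 ≤ A := by positivity
  have hs0 : 0 ≤ s := by positivity
  have hv0 : (0 : ℝ) ≤ v := Nat.cast_nonneg v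
  have habs : ∀ u w : ℝ, (v : ℝ) * (u - w) ≤ v * |u - w| := fun u w => by
    gcongr; exact le_abs_self _
  have habs' : ∀ u w : ℝ, (v : ℝ) * (w - u) ≤ v * |u - w| := fun u w => by
    rw [abs_sub_comm]; exact habs w u
  have hAF : A ≤ 2 ^ Ca * F := by
    rw [hA, hF, ← mul_assoc, ← Real.rpow_add (by norm_num)]
    gcongr
    · norm_num
    · have := habs' (α x) (α y); nlinarith
  have h0 : (2 : ℝ) ^ ((v : ℝ) * (α₀ x + n / 2)) * 2 ^ (-((v : ℝ) * (α₀ y + n / 2))) ≤ 2 ^ Ca0 := by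
    rw [← Real.rpow_add (by norm_num)]
    gcongr
    · norm_num
    · have := habs (α₀ x) (α₀ y); nlinarith
  have hmain : A ^ γ y ≤ (Ct + Cu) * max (F ^ γ x) s := by
    set L := Real.log (Real.exp 1 + ‖y‖) with hL
    have hL1 : 1 ≤ L := log_ge_one (norm_nonneg y)
    have hl2 : 0 < Real.log 2 := Real.log_pos (by norm_num)
    have hl21 : Real.log 2 ≤ 1 := by have := Real.log_two_lt_d9; linarith
    by_cases hAt : A ≤ Real.exp (-(K * (v * Real.log 2 + L)))
    · have h1 : A ^ γ y ≤ Ct * s := by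
        calc A ^ γ y ≤ Real.exp (-(K * (v * Real.log 2 + L))) ^ γ y :=
              Real.rpow_le_rpow hA0 hAt (hg0.le.trans hgy0)
          _ = Real.exp (-(K * (v * Real.log 2 + L)) * γ y) := by rw [Real.exp_mul]
          _ ≤ Real.exp (-(K * (v * Real.log 2 + L)) * g0) := by
              apply Real.exp_le_exp.2
              have : 0 ≤ K * (v * Real.log 2 + L) := by positivity
              nlinarith
          _ = Real.exp (-((n : ℝ) + 1) * (v * Real.log 2)) * Real.exp (L * (-((n : ℝ) + 1))) := by
              rw [← Real.exp_add, hK]; congr 1; field_simp; ring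
          _ ≤ (1 / 2) ^ v * (Ct * (1 + ‖x‖) ^ (-((n : ℝ) + 1))) := by
              have e1 : Real.exp (-((n : ℝ) + 1) * (v * Real.log 2)) ≤ (1 / 2) ^ v := by
                have : ((1 : ℝ) / 2) ^ v = Real.exp (-(v * Real.log 2)) := by
                  rw [Real.exp_neg, ← Real.log_pow, Real.exp_log (by positivity)]; simp
                rw [this]
                apply Real.exp_le_exp.2
                have : 0 ≤ v * Real.log 2 := by positivity
                nlinarith
              have e2 : Real.exp (L * (-((n : ℝ) + 1))) ≤ Ct * (1 + ‖x‖) ^ (-((n : ℝ) + 1)) := by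
                rw [Real.exp_mul, hL, Real.exp_log (by positivity), Real.rpow_neg (by positivity),
                  Real.rpow_neg (by positivity), hCt, ← div_eq_mul_inv,
                  ← Real.div_rpow (by positivity) (by positivity), ← Real.inv_rpow (by positivity)]
                refine Real.rpow_le_rpow (by positivity) ?_ (by positivity)
                rw [inv_eq_one_div, div_le_div_iff₀ (by positivity) (by positivity)]
                have h1 : ‖x‖ ≤ ‖y‖ + ‖x - y‖ := by
                  have := norm_add_le y (x - y); simpa using this
                have h2 : ((n : ℝ) + 1) / 2 ^ v ≤ n + 1 :=
                  div_le_self (by positivity) (one_le_pow₀ (by norm_num))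
                have : 1 ≤ Real.exp 1 := Real.one_le_exp (by norm_num)
                nlinarith [norm_nonneg y]
              gcongr
          _ = Ct * s := by rw [hs]; ring
      calc A ^ γ y ≤ Ct * s := h1
        _ ≤ (Ct + Cu) * max (F ^ γ x) s := by
          gcongr
          · linarith
          · exact le_max_right _ _
    · push Not at hAt
      have hApos : 0 < A := (Real.exp_pos _).trans hAt
      have hlog1 : -(K * (v * Real.log 2 + L)) ≤ Real.log A := (Real.le_log_iff_exp_le hApos).2 hAt.le
      have hlog2 : Real.log A ≤ Ca * Real.log 2 + (Real.log Cb + v * n * Real.log 2) := by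
        rw [← Real.log_rpow (by norm_num), ← Real.log_rpow (by norm_num),
          ← Real.log_mul (by positivity) (by positivity),
          ← Real.log_mul (by positivity) (by positivity)]
        apply Real.log_le_log hApos
        refine hAF.trans ?_
        gcongr
      have hlCb : 0 ≤ Real.log Cb := Real.log_nonneg hCb
      have hlogA : |Real.log A| ≤ K * v + K * L + Ca + Real.log Cb + v * n := by
        have i1 : v * Real.log 2 ≤ v := by nlinarith
        have i2 : Ca * Real.log 2 ≤ Ca := by nlinarith
        have i3 : v * n * Real.log 2 ≤ v * n := by
          have : 0 ≤ (v : ℝ) * n := by positivity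
          nlinarith
        have i4 : K * (v * Real.log 2) ≤ K * v := by gcongr
        have i5 : 0 ≤ K * v := by positivity
        have i6 : 0 ≤ K * L := by positivity
        have i7 : 0 ≤ (v : ℝ) * n := by positivity
        rw [abs_le]; constructor <;> linarith
      have hexp : (γ y - γ x) * Real.log A ≤ B := by
        calc (γ y - γ x) * Real.log A ≤ |γ x - γ y| * |Real.log A| := by
              rw [abs_sub_comm, ← abs_mul]; exact le_abs_self _
          _ ≤ |γ x - γ y| * (K * v + K * L + Ca + Real.log Cb + v * n) := by gcongr
          _ = K * (v * |γ x - γ y|) + K * (L * |γ x - γ y|) + (Ca + Real.log Cb) * |γ x - γ y|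
              + n * (v * |γ x - γ y|) := by ring
          _ ≤ K * Cg + K * Cg + (Ca + Real.log Cb) * Cg + n * Cg := by gcongr
          _ = B := by rw [hB]; ring
      calc A ^ γ y = A ^ γ x * Real.exp ((γ y - γ x) * Real.log A) := by
            rw [mul_comm (γ y - γ x), ← Real.rpow_def_of_pos hApos, ← Real.rpow_add hApos]
            congr 1; ring
        _ ≤ (2 ^ Ca * F) ^ γ x * Real.exp B := by
            gcongr
            exact hg0.le.trans hgx0
        _ = (2 : ℝ) ^ (Ca * γ x) * F ^ γ x * Real.exp B := by
            rw [Real.mul_rpow (by positivity) hF0, Real.rpow_mul (by norm_num)]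
        _ ≤ (2 : ℝ) ^ (Ca * g1) * F ^ γ x * Real.exp B := by
            gcongr; norm_num
        _ = Cu * F ^ γ x := by rw [hCu]; ring
        _ ≤ (Ct + Cu) * max (F ^ γ x) s := by
          gcongr
          · linarith
          · exact le_max_left _ _
  rw [← mul_assoc, mul_assoc (2 ^ Ca0 : ℝ)]
  gcongr

lemma modular_bound {n : ℕ} (α p q : En n → ℝ) (Ca : ℝ) (hCa : 0 ≤ Ca) (hp : ∀ x, 1 ≤ p x)
    (hq : ∀ x, 1 ≤ q x)
    (hα : ∀ (v : ℕ) (x : En n), (v : ℝ) * |α x - α (corner v (cubeIdx v x))| ≤ Ca)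
    (l : ℕ → (Fin n → ℤ) → ℝ) (hl : ∀ v m, 0 ≤ l v m)
    (hmod : ∫⁻ x, ((∑' v : ℕ,
      ENNReal.ofReal ((2 : ℝ) ^ ((v : ℝ) * (α x + n / 2)) * l v (cubeIdx v x)) ^ q x)
        ^ (1 / q x)) ^ p x ≤ 1) (v : ℕ) (x : En n) :
    (2 : ℝ) ^ ((v : ℝ) * (α x + n / 2)) * l v (cubeIdx v x) ≤ 2 ^ (2 * Ca) * 2 ^ ((v : ℝ) * n) := by
  have hv0 : (0 : ℝ) ≤ v := Nat.cast_nonneg v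
  have hone : (1 : ℝ) ≤ 2 ^ ((v : ℝ) * n) := Real.one_le_rpow (by norm_num) (by positivity)
  set F := (2 : ℝ) ^ ((v : ℝ) * (α x + n / 2)) * l v (cubeIdx v x) with hF
  set B : ℝ := F / 2 ^ (2 * Ca) with hB
  suffices h : B ≤ 2 ^ ((v : ℝ) * n) by
    rwa [hB, div_le_iff₀' (by positivity)] at h
  by_contra hcon
  push Not at hcon
  have hB1 : 1 ≤ B := hone.trans hcon.le
  obtain ⟨hmeas, hvol⟩ := volume_cube v (cubeIdx v x)
  have key : ∀ y ∈ dyadicCube n (v : ℤ) (cubeIdx v x), ENNReal.ofReal B ≤ ((∑' v : ℕ,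
      ENNReal.ofReal ((2 : ℝ) ^ ((v : ℝ) * (α y + n / 2)) * l v (cubeIdx v y)) ^ q y)
        ^ (1 / q y)) ^ p y := by
    intro y hy
    have hxy : cubeIdx v x = cubeIdx v y := (mem_cube_iff _ _ _).1 hy
    have hqy := lt_of_lt_of_le one_pos (hq y)
    have hBF : B ≤ (2 : ℝ) ^ ((v : ℝ) * (α y + n / 2)) * l v (cubeIdx v y) := by
      rw [hB, div_le_iff₀ (by positivity), hF, ← hxy, mul_right_comm, ← Real.rpow_add (by norm_num)]
      have := hl v (cubeIdx v x)
      gcongr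
      · norm_num
      · have h1 := hα v x
        have h2 := hα v y
        rw [← hxy] at h2
        set z := corner v (cubeIdx v x)
        have h3 : (v : ℝ) * (α x - α y) ≤ 2 * Ca := by
          calc (v : ℝ) * (α x - α y) ≤ v * (|α x - α z| + |α y - α z|) := by
                gcongr
                have a1 := le_abs_self (α x - α z)
                have a2 := neg_abs_le (α y - α z)
                linarith
            _ ≤ 2 * Ca := by linarith
        nlinarith
    have h1 : ENNReal.ofReal B ≤ (∑' v : ℕ,
      ENNReal.ofReal ((2 : ℝ) ^ ((v : ℝ) * (α y + n / 2)) * l v (cubeIdx v y)) ^ q y)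
        ^ (1 / q y) := by
      rw [one_div, ENNReal.le_rpow_inv_iff hqy]
      refine le_trans ?_ (ENNReal.le_tsum v)
      gcongr
    have h1B : 1 ≤ ENNReal.ofReal B := by
      rw [← ENNReal.ofReal_one]; exact ENNReal.ofReal_le_ofReal hB1
    calc ENNReal.ofReal B = ENNReal.ofReal B ^ (1 : ℝ) := (ENNReal.rpow_one _).symm
      _ ≤ ENNReal.ofReal B ^ p y := ENNReal.rpow_le_rpow_of_exponent_le h1B (hp y)
      _ ≤ _ := ENNReal.rpow_le_rpow h1 (zero_le_one.trans (hp y))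
  have h2 : ENNReal.ofReal B * ENNReal.ofReal ((1 / 2 ^ v) ^ n) ≤ 1 := by
    rw [← hvol, ← setLIntegral_const]
    refine le_trans ?_ ((setLIntegral_le_lintegral (dyadicCube n (v : ℤ) (cubeIdx v x)) _).trans hmod)
    exact setLIntegral_mono' hmeas key
  rw [← ENNReal.ofReal_mul (by positivity), ENNReal.ofReal_le_one] at h2
  have h3 : (2 : ℝ) ^ ((v : ℝ) * n) = (2 ^ v) ^ n := by
    rw [Real.rpow_mul (by norm_num), Real.rpow_natCast, Real.rpow_natCast]
  rw [h3] at hcon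
  rw [one_div, inv_pow, ← div_eq_mul_inv, div_le_one (by positivity)] at h2
  linarith

lemma lq_sum_bound {q0 q g : ℝ} (hq0 : 1 ≤ q0) (hg : 0 < g) (hq : q = g * q0)
    (F G : ℕ → ℝ≥0∞) (E κ : ℝ≥0∞)
    (h : ∀ v, G v ≤ κ * max (F v ^ g) (2⁻¹ ^ v * E)) :
    (∑' v, G v ^ q0) ^ (1 / q0) ≤ 4 * κ * max (((∑' v, F v ^ q) ^ (1 / q)) ^ g) E := by
  have h0 : 0 < q0 := lt_of_lt_of_le one_pos hq0
  have hX : ∑' v, G v ^ q0 ≤ κ ^ q0 * (∑' v, F v ^ q + 2 * E ^ q0) := by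
    calc ∑' v, G v ^ q0 ≤ ∑' v, κ ^ q0 * (F v ^ q + 2⁻¹ ^ v * E ^ q0) := by
          refine ENNReal.tsum_le_tsum fun v => ?_
          refine (ENNReal.rpow_le_rpow (h v) h0.le).trans ?_
          rw [ENNReal.mul_rpow_of_nonneg _ _ h0.le]
          gcongr
          rcases le_total (F v ^ g) (2⁻¹ ^ v * E) with hh | hh
          · rw [max_eq_right hh, ENNReal.mul_rpow_of_nonneg _ _ h0.le]
            refine le_trans ?_ le_add_self
            gcongr
            calc ((2⁻¹ : ℝ≥0∞) ^ v) ^ q0 ≤ (2⁻¹ ^ v) ^ (1 : ℝ) :=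
                  ENNReal.rpow_le_rpow_of_exponent_ge (pow_le_one₀ zero_le (by simp)) hq0
              _ = _ := ENNReal.rpow_one _
          · rw [max_eq_left hh, ← ENNReal.rpow_mul, ← hq]
            exact le_self_add
      _ = _ := by
          rw [ENNReal.tsum_mul_left, ENNReal.tsum_add, ENNReal.tsum_mul_right, ENNReal.tsum_geometric,
            ENNReal.one_sub_inv_two, inv_inv]
  have hi : 0 ≤ 1 / q0 := by positivity
  have hi1 : 1 / q0 ≤ 1 := by rw [div_le_one h0]; exact hq0
  refine (ENNReal.rpow_le_rpow hX hi).trans ?_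
  rw [ENNReal.mul_rpow_of_nonneg _ _ hi, ← ENNReal.rpow_mul, mul_one_div_cancel h0.ne',
    ENNReal.rpow_one, ← ENNReal.rpow_mul]
  have e1 : 1 / q * g = 1 / q0 := by rw [hq]; field_simp
  rw [e1]
  set X := (∑' v, F v ^ q) ^ (1 / q0) with hXd
  have : (∑' v, F v ^ q + 2 * E ^ q0) ^ (1 / q0) ≤ 4 * max X E := by
    calc _ ≤ (∑' v, F v ^ q) ^ (1 / q0) + (2 * E ^ q0) ^ (1 / q0) :=
          ENNReal.rpow_add_le_add_rpow _ _ hi hi1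
      _ ≤ X + 2 * E := by
          gcongr
          rw [ENNReal.mul_rpow_of_nonneg _ _ hi, ← ENNReal.rpow_mul, mul_one_div_cancel h0.ne',
            ENNReal.rpow_one]
          gcongr
          calc (2 : ℝ≥0∞) ^ (1 / q0) ≤ 2 ^ (1 : ℝ) :=
                ENNReal.rpow_le_rpow_of_exponent_le (by norm_num) hi1
            _ = 2 := ENNReal.rpow_one _
      _ ≤ max X E + 2 * max X E + max X E := by
          refine le_trans ?_ le_self_add
          gcongr
          · exact le_max_left _ _
          · exact le_max_right _ _
      _ = 4 * max X E := by ring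
  calc _ ≤ κ * (4 * max X E) := by gcongr
    _ = _ := by ring

lemma seqNorm_le_one {n : ℕ} (α₀ p₀ q₀ p q γ : En n → ℝ) (hp₀ : ∀ x, 1 ≤ p₀ x)
    (hq₀ : ∀ x, 1 ≤ q₀ x) (hγ : ∀ x, 0 < γ x) (hp : ∀ x, p x = γ x * p₀ x)
    (hq : ∀ x, q x = γ x * q₀ x) (F : ℕ → En n → ℝ≥0∞) (μ : ℕ → (Fin n → ℤ) → ℂ)
    (B : ℝ≥0∞) (hBt : B ≠ ⊤)
    (hB : B = 1 + ∫⁻ x : En n, ENNReal.ofReal ((1 + ‖x‖) ^ (-((n : ℝ) + 1))))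
    (hF : ∫⁻ x, ((∑' v, F v x ^ q x) ^ (1 / q x)) ^ p x ≤ 1)
    (h : ∀ (v : ℕ) (x : En n), ENNReal.ofReal ((2 : ℝ) ^ ((v : ℝ) * (α₀ x + n / 2)) * ‖μ v (cubeIdx v x)‖) ≤
      (4 * B)⁻¹ * max (F v x ^ γ x) (2⁻¹ ^ v * ENNReal.ofReal ((1 + ‖x‖) ^ (-((n : ℝ) + 1))))) :
    seqNorm α₀ p₀ q₀ μ ≤ 1 := by
  have hB1 : 1 ≤ B := by rw [hB]; exact le_self_add
  have hB0 : B ≠ 0 := (lt_of_lt_of_le one_pos hB1).ne'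
  have hBi : B⁻¹ ≤ 1 := ENNReal.inv_le_one.2 hB1
  set E : En n → ℝ≥0∞ := fun x => ENNReal.ofReal ((1 + ‖x‖) ^ (-((n : ℝ) + 1))) with hE
  have hE1 : ∀ x, E x ≤ 1 := fun x => by
    rw [hE, ENNReal.ofReal_le_one]
    apply Real.rpow_le_one_of_one_le_of_nonpos
    · linarith [norm_nonneg x]
    · linarith [(Nat.cast_nonneg n : (0 : ℝ) ≤ n)]
  rw [seqNorm_eq]
  refine sInf_le ⟨one_pos, ?_⟩
  have e4 : 4 * (4 * B)⁻¹ = B⁻¹ := by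
    rw [ENNReal.mul_inv (by simp) (by simp), ← mul_assoc,
      ENNReal.mul_inv_cancel (by norm_num) (by norm_num), one_mul]
  calc _ ≤ ∫⁻ x, B⁻¹ * (((∑' v, F v x ^ q x) ^ (1 / q x)) ^ p x + E x) := by
        refine lintegral_mono fun x => ?_
        have h0 : 0 < p₀ x := lt_of_lt_of_le one_pos (hp₀ x)
        have h1 := lq_sum_bound (hq₀ x) (hγ x) (hq x) (fun v => F v x) _ (E x) _ (fun v => h v x)
        rw [e4] at h1
        rw [div_one]
        refine (ENNReal.rpow_le_rpow h1 h0.le).trans ?_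
        rw [ENNReal.mul_rpow_of_nonneg _ _ h0.le]
        gcongr
        · calc B⁻¹ ^ p₀ x ≤ B⁻¹ ^ (1 : ℝ) :=
                ENNReal.rpow_le_rpow_of_exponent_ge hBi (hp₀ x)
            _ = _ := ENNReal.rpow_one _
        · rcases le_total (((∑' v, F v x ^ q x) ^ (1 / q x)) ^ γ x) (E x) with hh | hh
          · rw [max_eq_right hh]
            refine le_trans ?_ le_add_self
            calc E x ^ p₀ x ≤ E x ^ (1 : ℝ) :=
                  ENNReal.rpow_le_rpow_of_exponent_ge (hE1 x) (hp₀ x)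
              _ = _ := ENNReal.rpow_one _
          · rw [max_eq_left hh, ← ENNReal.rpow_mul _ (γ x), ← hp]
            exact le_self_add
    _ = B⁻¹ * ((∫⁻ x, ((∑' v, F v x ^ q x) ^ (1 / q x)) ^ p x) + ∫⁻ x, E x) := by
        rw [lintegral_const_mul' _ _ (by simpa using hB0), lintegral_add_right]
        rw [hE]; fun_prop
    _ ≤ B⁻¹ * B := by
        rw [hB]; gcongr
    _ = 1 := ENNReal.inv_mul_cancel hB0 hBt

lemma gamma_eq {θ p p0 p1 : ℝ} (hθ : θ ∈ Set.Ioo (0 : ℝ) 1) (h0 : 1 ≤ p0) (h1 : 1 ≤ p1)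
    (h : 1 / p = (1 - θ) / p0 + θ / p1) : p / p0 = p1 / ((1 - θ) * p1 + θ * p0) := by
  have hp := one_le_of_inv hθ h0 h1 h
  obtain ⟨ha, hb⟩ := hθ
  have h1' : 0 < 1 - θ := by linarith
  have hD : 0 < (1 - θ) * p1 + θ * p0 := by positivity
  rw [div_add_div _ _ (by positivity) (by positivity), div_eq_div_iff (by positivity) (by positivity)] at h
  rw [div_eq_div_iff (by positivity) (by positivity)]
  linarith

lemma gamma_diff {θ p0 p1 p0' p1' b0 b1 : ℝ} (hθ : θ ∈ Set.Ioo (0 : ℝ) 1) (h0 : 1 ≤ p0) (h1 : 1 ≤ p1)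
    (h0' : 1 ≤ p0') (h1' : 1 ≤ p1') (hb0 : p0' ≤ b0) (hb1 : p1' ≤ b1) :
    |p1 / ((1 - θ) * p1 + θ * p0) - p1' / ((1 - θ) * p1' + θ * p0')| ≤
      b0 * |p1 - p1'| + b1 * |p0 - p0'| := by
  obtain ⟨ha, hb⟩ := hθ
  have ht : 0 < 1 - θ := by linarith
  have hD : 1 ≤ (1 - θ) * p1 + θ * p0 := by nlinarith
  have hD' : 1 ≤ (1 - θ) * p1' + θ * p0' := by nlinarith
  rw [div_sub_div _ _ (by positivity) (by positivity), abs_div,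
    abs_of_pos (by positivity : 0 < ((1 - θ) * p1 + θ * p0) * ((1 - θ) * p1' + θ * p0'))]
  refine (div_le_self (abs_nonneg _) (by nlinarith)).trans ?_
  have e : p1 * ((1 - θ) * p1' + θ * p0') - ((1 - θ) * p1 + θ * p0) * p1' =
      θ * (p0' * (p1 - p1') + p1' * (p0' - p0)) := by ring
  rw [e, abs_mul, abs_of_pos ha]
  calc θ * |p0' * (p1 - p1') + p1' * (p0' - p0)| ≤ 1 * |p0' * (p1 - p1') + p1' * (p0' - p0)| := by
        gcongr
    _ ≤ |p0' * (p1 - p1')| + |p1' * (p0' - p0)| := by rw [one_mul]; exact abs_add_le _ _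
    _ = p0' * |p1 - p1'| + p1' * |p0 - p0'| := by
        rw [abs_mul, abs_mul, abs_of_pos (by positivity : 0 < p0'), abs_of_pos (by positivity : 0 < p1'),
          abs_sub_comm p0']
    _ ≤ _ := by gcongr

lemma upper_one {n : ℕ} (θ : ℝ) (hθ : θ ∈ Set.Ioo (0 : ℝ) 1)
    (p₀ p₁ q₀ α₀ p q α : En n → ℝ)
    (hp₀ : ∃ c, GlobLogHolder c p₀) (hp₁ : ∃ c, GlobLogHolder c p₁)
    (hp₀b : ∃ b : ℝ, ∀ x, 1 ≤ p₀ x ∧ p₀ x ≤ b)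
    (hp₁b : ∃ b : ℝ, ∀ x, 1 ≤ p₁ x ∧ p₁ x ≤ b)
    (hq₀b : ∀ x, 1 ≤ q₀ x) (hq1 : ∀ x, 1 ≤ q x)
    (hα₀ : ∃ c, LocLogHolder c α₀)
    (hα : ∃ C : ℝ, 0 ≤ C ∧ ∀ (v : ℕ) (x : En n), (v : ℝ) * |α x - α (corner v (cubeIdx v x))| ≤ C)
    (hp : ∀ x, 1 / p x = (1 - θ) / p₀ x + θ / p₁ x)
    (hγ : ∀ x, p x / p₀ x = q x / q₀ x) :
    ∃ D : ℝ, 0 < D ∧ ∀ l : ℕ → (Fin n → ℤ) → ℝ, (∀ v m, 0 ≤ l v m) →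
      (∫⁻ x, ((∑' v : ℕ,
      ENNReal.ofReal ((2 : ℝ) ^ ((v : ℝ) * (α x + n / 2)) * l v (cubeIdx v x)) ^ q x)
        ^ (1 / q x)) ^ p x ≤ 1) →
      seqNorm α₀ p₀ q₀ (fun v m => ((muSeq α α₀ (fun x => p x / p₀ x) l v m / D : ℝ) : ℂ)) ≤ 1 := by
  obtain ⟨c0, hc0⟩ := hp₀
  obtain ⟨c1, hc1⟩ := hp₁
  obtain ⟨b0, hb0⟩ := hp₀b
  obtain ⟨b1, hb1⟩ := hp₁b
  obtain ⟨ca, hca⟩ := hα₀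
  obtain ⟨Ca, hCa0, hCa⟩ := hα
  obtain ⟨Ca0, -, hCa0'⟩ := hca.cube
  obtain ⟨C0, hC0, hC0'⟩ := hc0.1.cube
  obtain ⟨C1, hC1, hC1'⟩ := hc1.1.cube
  obtain ⟨G0, hG0, hG0'⟩ := hc0.cube
  obtain ⟨G1, hG1, hG1'⟩ := hc1.cube
  have hcc0 := hc0.1.1
  have hcc1 := hc1.1.1
  have hb01 : 1 ≤ b0 := (hb0 0).1.trans (hb0 0).2
  have hb11 : 1 ≤ b1 := (hb1 0).1.trans (hb1 0).2
  have hp1 : ∀ x, 1 ≤ p x := fun x => one_le_of_inv hθ (hb0 x).1 (hb1 x).1 (hp x)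
  set γ : En n → ℝ := fun x => p x / p₀ x with hγd
  have hge : ∀ x, γ x = p₁ x / ((1 - θ) * p₁ x + θ * p₀ x) := fun x =>
    gamma_eq hθ (hb0 x).1 (hb1 x).1 (hp x)
  have hdiff : ∀ x y, |γ x - γ y| ≤ b0 * |p₁ x - p₁ y| + b1 * |p₀ x - p₀ y| := fun x y => by
    rw [hge x, hge y]
    exact gamma_diff hθ (hb0 x).1 (hb1 x).1 (hb0 y).1 (hb1 y).1 (hb0 y).2 (hb1 y).2
  have hgb : ∀ x, 1 / b0 ≤ γ x ∧ γ x ≤ b1 := by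
    intro x
    have := hp1 x
    have := hb0 x
    have h3 := hb1 x
    obtain ⟨ha, hb⟩ := hθ
    constructor
    · rw [hγd]
      beta_reduce
      rw [div_le_div_iff₀ (by linarith) (by linarith)]
      nlinarith
    · rw [hge x]
      exact (div_le_self (by linarith) (by nlinarith)).trans h3.2
  have hg0 : ∀ x, 0 < γ x := fun x => lt_of_lt_of_le (by positivity) (hgb x).1
  set Cg := b0 * (C1 + G1 + c1) + b1 * (C0 + G0 + c0) with hCg
  have hCg0 : 0 ≤ Cg := by positivity
  obtain ⟨K, hK, hpt⟩ := pointwise α α₀ γ (1 / b0) b1 Ca Ca0 Cg (2 ^ (2 * Ca)) (by positivity) hgb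
    hCa0 hCg0 (Real.one_le_rpow (by norm_num) (by positivity)) hCa hCa0'
    (fun v x => by
      set y := corner v (cubeIdx v x)
      calc (v : ℝ) * |γ x - γ y| ≤ v * (b0 * |p₁ x - p₁ y| + b1 * |p₀ x - p₀ y|) := by
            gcongr; exact hdiff x y
        _ = b0 * (v * |p₁ x - p₁ y|) + b1 * (v * |p₀ x - p₀ y|) := by ring
        _ ≤ b0 * C1 + b1 * C0 := by
            gcongr
            · exact hC1' v x
            · exact hC0' v x
        _ ≤ Cg := by rw [hCg]; gcongr <;> linarith)
    (fun v x => by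
      set y := corner v (cubeIdx v x)
      have hL := log_ge_one (norm_nonneg y)
      calc _ ≤ Real.log (Real.exp 1 + ‖y‖) * (b0 * |p₁ x - p₁ y| + b1 * |p₀ x - p₀ y|) := by
            gcongr; exact hdiff x y
        _ = b0 * (Real.log (Real.exp 1 + ‖y‖) * |p₁ x - p₁ y|) +
            b1 * (Real.log (Real.exp 1 + ‖y‖) * |p₀ x - p₀ y|) := by ring
        _ ≤ b0 * G1 + b1 * G0 := by
            gcongr
            · exact hG1' v x
            · exact hG0' v x
        _ ≤ Cg := by rw [hCg]; gcongr <;> linarith)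
    (fun v x => by
      set y := corner v (cubeIdx v x)
      calc _ ≤ (b0 * |p₁ x - p₁ y| + b1 * |p₀ x - p₀ y|) := hdiff x y
        _ ≤ b0 * c1 + b1 * c0 := by
            gcongr
            · exact hc1.1.bdd x y
            · exact hc0.1.bdd x y
        _ ≤ Cg := by rw [hCg]; gcongr <;> linarith)
  set B : ℝ≥0∞ := 1 + ∫⁻ x : En n, ENNReal.ofReal ((1 + ‖x‖) ^ (-((n : ℝ) + 1))) with hB
  have hBt : B ≠ ⊤ := by
    refine ENNReal.add_ne_top.2 ⟨by simp, (finite_integral_one_add_norm ?_).ne⟩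
    simp
  have hB1 : 1 ≤ B := by rw [hB]; exact le_self_add
  have hBr : 0 < B.toReal := ENNReal.toReal_pos (lt_of_lt_of_le one_pos hB1).ne' hBt
  refine ⟨4 * B.toReal * K, by positivity, fun l hl hmod => ?_⟩
  have hbd := modular_bound α p q Ca hCa0 hp1 hq1 hCa l hl hmod
  refine seqNorm_le_one α₀ p₀ q₀ p q γ (fun x => (hb0 x).1) hq₀b hg0 ?_ ?_ _ _ B hBt hB hmod ?_
  · intro x
    have := (hb0 x).1
    rw [hγd]; field_simp
  · intro x
    have := hq₀b x
    have e : γ x = q x / q₀ x := hγ x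
    rw [e]; field_simp
  intro v x
  have hm := hpt l hl hbd v x
  have hl0 := hl v (cubeIdx v x)
  have hmu0 : 0 ≤ muSeq α α₀ γ l v (cubeIdx v x) := by unfold muSeq; have := hl v; positivity
  have e1 : (4 * B)⁻¹ = ENNReal.ofReal (4 * B.toReal)⁻¹ := by
    rw [ENNReal.ofReal_inv_of_pos (by positivity), ENNReal.ofReal_mul (by norm_num),
      ENNReal.ofReal_toReal hBt]
    norm_num
  have e2 : (2⁻¹ : ℝ≥0∞) ^ v = ENNReal.ofReal ((1 / 2) ^ v) := by
    rw [ENNReal.ofReal_pow (by norm_num), one_div, ENNReal.ofReal_inv_of_pos (by norm_num)]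
    norm_num
  rw [e1, e2, ← ENNReal.ofReal_mul (by positivity), ENNReal.ofReal_rpow_of_nonneg (by positivity) (hg0 x).le,
    ← ENNReal.ofReal_max, ← ENNReal.ofReal_mul (by positivity)]
  apply ENNReal.ofReal_le_ofReal
  rw [Complex.norm_real, Real.norm_eq_abs, abs_of_nonneg (by positivity)]
  rw [← mul_div_assoc, div_le_iff₀ (by positivity)]
  refine hm.trans_eq ?_
  field_simp

lemma mu_prod {n : ℕ} (θ : ℝ) (hθ : θ ∈ Set.Ioo (0 : ℝ) 1) (α α₀ α₁ γ δ : En n → ℝ)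
    (hα : ∀ x, α x = (1 - θ) * α₀ x + θ * α₁ x) (hγδ : ∀ x, (1 - θ) * γ x + θ * δ x = 1)
    (l : ℕ → (Fin n → ℤ) → ℝ) (hl : ∀ v m, 0 ≤ l v m) (v : ℕ) (m : Fin n → ℤ) :
    muSeq α α₀ γ l v m ^ (1 - θ) * muSeq α α₁ δ l v m ^ θ = l v m := by
  unfold muSeq
  have hl0 := hl v m
  set y := corner v m
  set A := (2 : ℝ) ^ ((v : ℝ) * (α y + n / 2)) * l v m with hA
  have hA0 : 0 ≤ A := by positivity
  rw [Real.mul_rpow (y := A ^ γ y) (by positivity) (by positivity),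
    Real.mul_rpow (y := A ^ δ y) (by positivity) (by positivity),
    ← Real.rpow_mul (x := 2) (by norm_num), ← Real.rpow_mul (x := 2) (by norm_num),
    ← Real.rpow_mul hA0, ← Real.rpow_mul hA0]
  have e1 : A ^ (γ y * (1 - θ)) * A ^ (δ y * θ) = A := by
    have h1 : γ y * (1 - θ) + δ y * θ = 1 := by linarith [hγδ y]
    rw [← Real.rpow_add' hA0 (by rw [h1]; norm_num), h1, Real.rpow_one]
  rw [mul_mul_mul_comm, e1, ← Real.rpow_add (by norm_num), hA, ← mul_assoc,
    ← Real.rpow_add (by norm_num), hα]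
  have : -(↑v * (α₀ y + ↑n / 2)) * (1 - θ) + -(↑v * (α₁ y + ↑n / 2)) * θ +
      ↑v * ((1 - θ) * α₀ y + θ * α₁ y + ↑n / 2) = 0 := by ring
  rw [this, Real.rpow_zero, one_mul]

/-- Theorem `calderon-prod11 copy(1)` (i): if `p(x)/p₀(x) = q(x)/q₀(x)`
for all `x`, then `(f^{α₀(·)}_{p₀(·),q₀(·)})^{1−θ}·(f^{α₁(·)}_{p₁(·),q₁(·)})^θ
= f^{α(·)}_{p(·),q(·)}` with equivalent norms. -/
theorem stmt14 {n : ℕ} (θ : ℝ) (hθ : θ ∈ Set.Ioo (0 : ℝ) 1)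
    (p₀ p₁ q₀ q₁ α₀ α₁ p q α : En n → ℝ)
    (hp₀ : ∃ c, GlobLogHolder c p₀) (hp₁ : ∃ c, GlobLogHolder c p₁)
    (hq₀ : ∃ c, GlobLogHolder c q₀) (hq₁ : ∃ c, GlobLogHolder c q₁)
    (hp₀b : ∃ b : ℝ, ∀ x, 1 ≤ p₀ x ∧ p₀ x ≤ b)
    (hp₁b : ∃ b : ℝ, ∀ x, 1 ≤ p₁ x ∧ p₁ x ≤ b)
    (hq₀b : ∃ b : ℝ, ∀ x, 1 ≤ q₀ x ∧ q₀ x ≤ b)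
    (hq₁b : ∃ b : ℝ, ∀ x, 1 ≤ q₁ x ∧ q₁ x ≤ b)
    (hα₀ : ∃ c, LocLogHolder c α₀) (hα₁ : ∃ c, LocLogHolder c α₁)
    (hp : ∀ x, 1 / p x = (1 - θ) / p₀ x + θ / p₁ x)
    (hq : ∀ x, 1 / q x = (1 - θ) / q₀ x + θ / q₁ x)
    (hα : ∀ x, α x = (1 - θ) * α₀ x + θ * α₁ x)
    (hγ : ∀ x, p x / p₀ x = q x / q₀ x) :
    ∃ c₁ c₂ : ℝ, 0 < c₁ ∧ 0 < c₂ ∧ ∀ lam : ℕ → (Fin n → ℤ) → ℂ,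
      ENNReal.ofReal c₁ * seqNorm α p q lam ≤
          calderonNorm (seqNorm α₀ p₀ q₀) (seqNorm α₁ p₁ q₁) θ lam ∧
        calderonNorm (seqNorm α₀ p₀ q₀) (seqNorm α₁ p₁ q₁) θ lam ≤
          ENNReal.ofReal c₂ * seqNorm α p q lam := by
  have hlow := lower_bound θ hθ p₀ p₁ q₀ q₁ α₀ α₁ p q α
  obtain ⟨b0, hb0⟩ := hp₀b
  obtain ⟨b1, hb1⟩ := hp₁b
  obtain ⟨d0, hd0⟩ := hq₀b
  obtain ⟨d1, hd1⟩ := hq₁b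
  have hθ2 := hθ
  obtain ⟨ht0, ht1⟩ := hθ2
  have ht1' : 0 < 1 - θ := by linarith
  have hθ' : 1 - θ ∈ Set.Ioo (0 : ℝ) 1 := ⟨by linarith, by linarith⟩
  have hp1 : ∀ x, 1 ≤ p x := fun x => one_le_of_inv hθ (hb0 x).1 (hb1 x).1 (hp x)
  have hq1 : ∀ x, 1 ≤ q x := fun x => one_le_of_inv hθ (hd0 x).1 (hd1 x).1 (hq x)
  have hwp : ∀ x, (1 - θ) * (p x / p₀ x) + θ * (p x / p₁ x) = 1 := fun x => by
    have := hp1 x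
    have e : (1 - θ) * (p x / p₀ x) + θ * (p x / p₁ x) = p x * (1 / p x) := by rw [hp x]; ring
    rw [e]; field_simp
  have hwq : ∀ x, (1 - θ) * (q x / q₀ x) + θ * (q x / q₁ x) = 1 := fun x => by
    have := hq1 x
    have e : (1 - θ) * (q x / q₀ x) + θ * (q x / q₁ x) = q x * (1 / q x) := by rw [hq x]; ring
    rw [e]; field_simp
  have hδ : ∀ x, p x / p₁ x = q x / q₁ x := fun x => by
    have h1 := hwp x
    have h2 := hwq x
    rw [hγ x] at h1
    have : θ * (p x / p₁ x) = θ * (q x / q₁ x) := by linarith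
    exact mul_left_cancel₀ ht0.ne' this
  have hαc : ∃ C : ℝ, 0 ≤ C ∧ ∀ (v : ℕ) (x : En n),
      (v : ℝ) * |α x - α (corner v (cubeIdx v x))| ≤ C := by
    obtain ⟨c0, h0⟩ := hα₀
    obtain ⟨c1, h1⟩ := hα₁
    obtain ⟨C0, hC0, h0'⟩ := h0.cube
    obtain ⟨C1, hC1, h1'⟩ := h1.cube
    refine ⟨C0 + C1, by positivity, fun v x => ?_⟩
    have i0 := h0' v x
    have i1 := h1' v x
    set y := corner v (cubeIdx v x)
    have e : α x - α y = (1 - θ) * (α₀ x - α₀ y) + θ * (α₁ x - α₁ y) := by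
      rw [hα, hα]; ring
    calc (v : ℝ) * |α x - α y| ≤ v * ((1 - θ) * |α₀ x - α₀ y| + θ * |α₁ x - α₁ y|) := by
          gcongr
          rw [e]
          refine (abs_add_le _ _).trans_eq ?_
          rw [abs_mul, abs_mul, abs_of_pos ht0, abs_of_pos ht1']
      _ = (1 - θ) * (v * |α₀ x - α₀ y|) + θ * (v * |α₁ x - α₁ y|) := by ring
      _ ≤ 1 * C0 + 1 * C1 := by gcongr; linarith
      _ = _ := by ring
  obtain ⟨D0, hD0, hup0⟩ := upper_one θ hθ p₀ p₁ q₀ α₀ p q α hp₀ hp₁ ⟨b0, hb0⟩ ⟨b1, hb1⟩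
    (fun x => (hd0 x).1) hq1 hα₀ hαc hp hγ
  obtain ⟨D1, hD1, hup1⟩ := upper_one (1 - θ) hθ' p₁ p₀ q₁ α₁ p q α hp₁ hp₀ ⟨b1, hb1⟩ ⟨b0, hb0⟩
    (fun x => (hd1 x).1) hq1 hα₁ hαc (fun x => by rw [hp x]; ring) hδ
  refine ⟨1 / 4, D0 + D1, by norm_num, by positivity, fun lam => ⟨?_, ?_⟩⟩
  · obtain ⟨c, hc⟩ := hp₀
    obtain ⟨c', hc'⟩ := hq₀
    obtain ⟨c'', hc''⟩ := hα₀
    exact hlow hc.1.continuous.measurable hc'.1.continuous.measurable hc''.continuous.measurable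
      (fun x => (hb0 x).1) (fun x => (hb1 x).1) (fun x => (hd0 x).1) (fun x => (hd1 x).1) hp hq hα lam
  have hD : ENNReal.ofReal (D0 + D1) ≠ 0 := by
    rw [Ne, ENNReal.ofReal_eq_zero]; push Not; positivity
  rw [mul_comm]
  refine (ENNReal.div_le_iff hD ENNReal.ofReal_ne_top).1 ?_
  rw [seqNorm_eq]
  refine le_sInf ?_
  rintro c ⟨hc0, hc⟩
  apply ENNReal.div_le_of_le_mul
  rcases eq_or_ne c ⊤ with rfl | hct
  · rw [ENNReal.top_mul hD]; exact le_top
  have hcr : 0 < c.toReal := ENNReal.toReal_pos hc0.ne' hct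
  set l : ℕ → (Fin n → ℤ) → ℝ := fun v m => ‖lam v m‖ / c.toReal with hl
  have hl0 : ∀ v m, 0 ≤ l v m := fun v m => by rw [hl]; positivity
  have hmod : ∫⁻ x, ((∑' v : ℕ,
      ENNReal.ofReal ((2 : ℝ) ^ ((v : ℝ) * (α x + n / 2)) * l v (cubeIdx v x)) ^ q x)
        ^ (1 / q x)) ^ p x ≤ 1 := by
    refine le_trans (lintegral_mono fun x => ?_) hc
    have hqx := lt_of_lt_of_le one_pos (hq1 x)
    refine ENNReal.rpow_le_rpow (le_of_eq ?_) (zero_le_one.trans (hp1 x))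
    have : ∀ v : ℕ, ENNReal.ofReal ((2 : ℝ) ^ ((v : ℝ) * (α x + n / 2)) * l v (cubeIdx v x)) ^ q x
        = (c⁻¹) ^ q x *
        ENNReal.ofReal ((2 : ℝ) ^ ((v : ℝ) * (α x + n / 2)) * ‖lam v (cubeIdx v x)‖) ^ q x := by
      intro v
      rw [← ENNReal.mul_rpow_of_nonneg _ _ hqx.le, hl]
      congr 1
      rw [← mul_div_assoc, ENNReal.ofReal_div_of_pos hcr, ENNReal.ofReal_toReal hct,
        div_eq_mul_inv, mul_comm]
    simp only [this]
    rw [ENNReal.tsum_mul_left, ENNReal.mul_rpow_of_nonneg _ _ (by positivity), ← ENNReal.rpow_mul,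
      mul_one_div_cancel hqx.ne', ENNReal.rpow_one]
    exact (mul_comm _ _).trans (div_eq_mul_inv _ _).symm
  refine sInf_le ⟨_, _, hup0 l hl0 hmod, hup1 l hl0 hmod, fun v m => ?_⟩
  have hprod := mu_prod θ hθ α α₀ α₁ (fun x => p x / p₀ x) (fun x => p x / p₁ x) hα hwp l hl0 v m
  have hnn : ∀ (a g : En n → ℝ), 0 ≤ muSeq α a g l v m := fun a g => by
    have := hl0 v m
    unfold muSeq; positivity
  have hm0 := hnn α₀ (fun x => p x / p₀ x)
  have hm1 := hnn α₁ (fun x => p x / p₁ x)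
  generalize muSeq α α₀ (fun x => p x / p₀ x) l v m = m0 at *
  generalize muSeq α α₁ (fun x => p x / p₁ x) l v m = m1 at *
  rw [Complex.norm_real, Complex.norm_real, Real.norm_eq_abs, Real.norm_eq_abs,
    abs_of_nonneg (by positivity), abs_of_nonneg (by positivity),
    ENNReal.ofReal_rpow_of_nonneg (by positivity) ht1'.le,
    ENNReal.ofReal_rpow_of_nonneg (by positivity) ht0.le]
  nth_rewrite 1 [← ENNReal.ofReal_toReal hct]
  rw [← ENNReal.ofReal_mul (by positivity), ← ENNReal.ofReal_mul (by positivity),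
    ← ENNReal.ofReal_mul (by positivity)]
  apply ENNReal.ofReal_le_ofReal
  have e0 : ‖lam v m‖ = c.toReal * l v m := by
    simp only [hl]; field_simp
  rw [e0, ← hprod, Real.div_rpow hm0 hD0.le, Real.div_rpow hm1 hD1.le]
  have hDD : D0 ^ (1 - θ) * D1 ^ θ ≤ D0 + D1 := by
    calc D0 ^ (1 - θ) * D1 ^ θ ≤ (D0 + D1) ^ (1 - θ) * (D0 + D1) ^ θ := by
          gcongr <;> linarith
      _ = D0 + D1 := by rw [← Real.rpow_add (by positivity)]; simp
  have e3 : c.toReal * (D0 + D1) * (m0 ^ (1 - θ) / D0 ^ (1 - θ)) * (m1 ^ θ / D1 ^ θ) =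
      c.toReal * (m0 ^ (1 - θ) * m1 ^ θ) * ((D0 + D1) / (D0 ^ (1 - θ) * D1 ^ θ)) := by
    field_simp
  rw [e3]
  refine le_mul_of_one_le_right (by positivity) ?_
  rwa [one_le_div (by positivity)]
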